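/- arXiv:1701.04527 — 3 statements merged into one kernel-verified Lean document; each statement's English description precedes it below -/
import Mathlib

section
/- Let P and Q be integral commutative monoids and h : P → Q a monoid homomorphism. Then h is integral if and only if for every integral commutative monoid R and every monoid homomorphism g : P → R, the pushout R ⊔_P Q of h along g in the category of commutative monoids is again an integral (cancellative) monoid. -/
/-!
Both directions rest on explicit congruences on `R × Q`.

If `h` is integral, relate `(r, q)` to `(r', q')` when `q = h a + s`, `q' = h b + s` and
`r + g a = r' + g b` for some `a b : P` and `s : Q`. Integrality of `h` is exactly what makes this
relation transitive (`integralCon`), and together with cancellation in `Q` and `R` it makes the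
quotient cancellative (`integralCon_cancel`). Any pushout `T` maps to this quotient, and the
quotient maps back to `T`; the composite `T → T` is the identity by uniqueness, so `T` embeds in a
cancellative monoid.

Conversely, let `h p₁ + q₁ = h p₂ + q₂`. Let `R ⊆ P × ℕ` consist of the `(x, n)` such that `x` lies
in `(p₁ + P) ∪ (p₂ + P)` if `n = 1` (`testMonoid`), with `g p = (p, 0)`. In the pushout,
`(p₁, 1) + q₁` and `(p₂, 1) + q₂` become equal after adding the image of `p₁`, hence are equal if
the pushout is cancellative. The congruence `testCon` contains the one defining the pushout, and
it relates these two elements only if `h p₁ + q₁` has the form `h x + q` with `x` in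
`(p₁ + P) ∩ (p₂ + P)`. Cancelling `h p₁` and `h p₂` then gives the required decompositions of `q₁`
and `q₂`.
-/

/-!
STATEMENT 1: Let `P` and `Q` be integral commutative monoids and `h : P → Q` a monoid
homomorphism. Then `h` is integral if and only if for every integral commutative monoid `R`
and every monoid homomorphism `g : P → R`, the pushout `R ⊔_P Q` of `h` along `g` in the
category of commutative monoids is again an integral (cancellative) monoid.
-/

universe u

/-- A commutative monoid (written additively) is *integral* (cancellative) if
`a + c = b + c` implies `a = b`. -/
def IsIntegralMonoid (M : Type u) [AddCommMonoid M] : Prop :=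
  ∀ a b c : M, a + c = b + c → a = b

/-- A homomorphism `h : P → Q` of commutative monoids is *integral* if whenever
`h p₁ + q₁ = h p₂ + q₂`, there exist `p₃ p₄ : P` and `q : Q` such that
`q₁ = h p₃ + q`, `q₂ = h p₄ + q` and `p₁ + p₃ = p₂ + p₄`. -/
def IsIntegralHom {P Q : Type u} [AddCommMonoid P] [AddCommMonoid Q] (h : P →+ Q) : Prop :=
  ∀ (p₁ p₂ : P) (q₁ q₂ : Q), h p₁ + q₁ = h p₂ + q₂ →
    ∃ (p₃ p₄ : P) (q : Q), q₁ = h p₃ + q ∧ q₂ = h p₄ + q ∧ p₁ + p₃ = p₂ + p₄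

/-- `(T, inQ, inR)` is a pushout of `h : P →+ Q` along `g : P →+ R` in the category of
commutative monoids: the square commutes and it satisfies the universal property. -/
structure IsMonoidPushout {P Q R T : Type u}
    [AddCommMonoid P] [AddCommMonoid Q] [AddCommMonoid R] [AddCommMonoid T]
    (h : P →+ Q) (g : P →+ R) (inQ : Q →+ T) (inR : R →+ T) : Prop where
  comm : inQ.comp h = inR.comp g
  desc : ∀ (X : Type u) [AddCommMonoid X] (fQ : Q →+ X) (fR : R →+ X),
    fQ.comp h = fR.comp g → ∃! d : T →+ X, d.comp inQ = fQ ∧ d.comp inR = fR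

/-! ### Pushouts of commutative monoids as quotients -/

section Pushout

variable {P Q R : Type u} [AddCommMonoid P] [AddCommMonoid Q] [AddCommMonoid R]

/-- The congruence on `R × Q` generated by `(g p, 0) ∼ (0, h p)`; its quotient is the pushout of
`h` along `g`. -/
def pushoutCon (h : P →+ Q) (g : P →+ R) : AddCon (R × Q) :=
  addConGen fun x y => ∃ p, x = (g p, 0) ∧ y = (0, h p)

theorem isMonoidPushout_pushoutCon (h : P →+ Q) (g : P →+ R) :
    IsMonoidPushout h g
      ((pushoutCon h g).mk'.comp (AddMonoidHom.inr R Q))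
      ((pushoutCon h g).mk'.comp (AddMonoidHom.inl R Q)) where
  comm := by
    ext p
    exact (AddCon.eq _).2 ((pushoutCon h g).symm (AddConGen.Rel.of _ _ ⟨p, rfl, rfl⟩))
  desc X _ fQ fR hf := by
    have hle : pushoutCon h g ≤ AddCon.ker (AddMonoidHom.coprod fR fQ) := by
      refine AddCon.addConGen_le.2 ?_
      rintro _ _ ⟨p, rfl, rfl⟩
      have := DFunLike.congr_fun hf p
      simpa [AddCon.ker_rel] using this.symm
    refine ⟨(pushoutCon h g).lift _ hle, ⟨?_, ?_⟩, ?_⟩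
    · ext q
      simp
    · ext r
      simp
    · rintro d ⟨h1, h2⟩
      refine AddCon.hom_ext (AddMonoidHom.ext fun x => ?_)
      have e1 := DFunLike.congr_fun h1 x.2
      have e2 := DFunLike.congr_fun h2 x.1
      simp only [AddMonoidHom.comp_apply, AddMonoidHom.inr_apply, AddMonoidHom.inl_apply] at e1 e2
      have e3 : x = (x.1, 0) + (0, x.2) := by simp
      conv_lhs => rw [e3]
      simp only [AddMonoidHom.comp_apply, map_add, e1, e2]
      simp

end Pushout

/-! ### Pushouts of integral homomorphisms -/

section Forward

variable {P Q R : Type u} [AddCommMonoid P] [AddCommMonoid Q] [AddCommMonoid R]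

/-- For an integral homomorphism `h`, the one-step description of the congruence on `R × Q` whose
quotient is the pushout of `h` along `g`. -/
def integralCon {h : P →+ Q} (hh : IsIntegralHom h) (g : P →+ R) : AddCon (R × Q) where
  r x y := ∃ (a b : P) (s : Q), x.2 = h a + s ∧ y.2 = h b + s ∧ x.1 + g a = y.1 + g b
  iseqv := by
    refine ⟨fun x => ⟨0, 0, x.2, by simp⟩, ?_, ?_⟩
    · rintro x y ⟨a, b, s, h1, h2, h3⟩
      exact ⟨b, a, s, h2, h1, h3.symm⟩
    · rintro ⟨r, q⟩ ⟨r', q'⟩ ⟨r'', q''⟩ ⟨a, b, s, rfl, h2, h3⟩ ⟨c, d, t, h4, rfl, h6⟩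
      dsimp only at *
      obtain ⟨e, f, u, rfl, rfl, h7⟩ := hh b c s t (h2.symm.trans h4)
      refine ⟨a + e, d + f, u, by simp [add_assoc], by simp [add_assoc], ?_⟩
      calc r + g (a + e) = r + g a + g e := by rw [map_add, add_assoc]
        _ = r' + g (b + e) := by rw [h3, map_add, add_assoc]
        _ = r' + g c + g f := by rw [h7, map_add, add_assoc]
        _ = r'' + g (d + f) := by rw [h6, map_add, add_assoc]
  add' := by
    rintro ⟨r, q⟩ ⟨r', q'⟩ ⟨x, y⟩ ⟨x', y'⟩ ⟨a, b, s, rfl, rfl, h3⟩ ⟨c, d, t, rfl, rfl, h6⟩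
    dsimp only at *
    refine ⟨a + c, b + d, s + t, ?_, ?_, ?_⟩
    · simp only [Prod.mk_add_mk, map_add]; abel
    · simp only [Prod.mk_add_mk, map_add]; abel
    · simp only [Prod.mk_add_mk, map_add]
      rw [add_add_add_comm, h3, h6, add_add_add_comm]

theorem integralCon_cancel (hQ : IsIntegralMonoid Q) (hR : IsIntegralMonoid R) {h : P →+ Q}
    (hh : IsIntegralHom h) (g : P →+ R) : IsIntegralMonoid (integralCon hh g).Quotient := by
  intro x y z hxyz
  induction x using AddCon.induction_on with | _ x
  induction y using AddCon.induction_on with | _ y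
  induction z using AddCon.induction_on with | _ z
  obtain ⟨r, q⟩ := x
  obtain ⟨r', q'⟩ := y
  obtain ⟨x, y⟩ := z
  rw [← AddCon.coe_add, ← AddCon.coe_add, AddCon.eq] at hxyz
  obtain ⟨a, b, s, h1, h2, h3⟩ := hxyz
  simp only [Prod.mk_add_mk] at h1 h2 h3
  have h4 : r + g a = r' + g b := hR _ _ x (by rw [add_right_comm, h3, add_right_comm])
  -- Integrality is applied to the crossed equation, in which `s`, `x` and `y` no longer occur.
  have h5 : h b + q = h a + q' := hQ _ _ y (by
    rw [add_assoc, h1, add_assoc, h2, add_left_comm])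
  obtain ⟨c, d, u, h6, h7, h8⟩ := hh _ _ _ _ h5
  refine (AddCon.eq _).2 ⟨c, d, u, h6, h7, hR _ _ (g a + g b) ?_⟩
  have h9 : g b + g c = g a + g d := by rw [← map_add, h8, map_add]
  calc r + g c + (g a + g b) = (r + g a) + (g b + g c) := by abel
    _ = r' + g d + (g a + g b) := by rw [h4, h9]; abel

theorem isIntegralMonoid_of_isMonoidPushout (hQ : IsIntegralMonoid Q) (hR : IsIntegralMonoid R)
    {h : P →+ Q} (hh : IsIntegralHom h) {g : P →+ R} {T : Type u} [AddCommMonoid T]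
    {inQ : Q →+ T} {inR : R →+ T} (hT : IsMonoidPushout h g inQ inR) : IsIntegralMonoid T := by
  let C := integralCon hh g
  have hcomm : (C.mk'.comp (AddMonoidHom.inr R Q)).comp h =
      (C.mk'.comp (AddMonoidHom.inl R Q)).comp g := by
    ext p
    exact (AddCon.eq _).2 ⟨p, 0, 0, by simp, by simp, by simp⟩
  obtain ⟨d, ⟨hd1, hd2⟩, -⟩ := hT.desc C.Quotient _ _ hcomm
  have hle : C ≤ AddCon.ker (AddMonoidHom.coprod inR inQ) := by
    rintro ⟨r, q⟩ ⟨r', q'⟩ ⟨a, b, s, h1, h2, h3⟩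
    dsimp only at h1 h2 h3
    have hc (p : P) : inQ (h p) = inR (g p) := DFunLike.congr_fun hT.comm p
    simp only [AddCon.ker_rel, AddMonoidHom.coprod_apply, h1, h2, map_add, hc]
    rw [← add_assoc, ← add_assoc, ← map_add, ← map_add, h3]
  let e : C.Quotient →+ T := C.lift _ hle
  have hed : e.comp d = AddMonoidHom.id T := by
    refine (hT.desc T inQ inR hT.comm).unique ⟨?_, ?_⟩ ⟨rfl, rfl⟩
    · rw [AddMonoidHom.comp_assoc, hd1]
      ext q
      simp [e]
    · rw [AddMonoidHom.comp_assoc, hd2]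
      ext r
      simp [e]
  have hinj : Function.LeftInverse e d := DFunLike.congr_fun hed
  intro x y z hxyz
  refine hinj.injective (integralCon_cancel hQ hR hh g _ _ (d z) ?_)
  rw [← map_add, hxyz, map_add]

end Forward

/-! ### A test pushout detecting integrality -/

section Backward

variable {P Q : Type u} [AddCommMonoid P] [AddCommMonoid Q]

/-- The submonoid of `P × ℕ` of pairs `(x, n)` with `x ∈ (p₁ + P) ∪ (p₂ + P)` if `n = 1`. The
elements of degree `1` are the ones that matter; degrees `n ≥ 2` are left unconstrained, which
suffices for closure under addition. -/
def testMonoid (p₁ p₂ : P) : AddSubmonoid (P × ℕ) where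
  carrier := {x | x.2 = 1 → (∃ a, x.1 = p₁ + a) ∨ ∃ b, x.1 = p₂ + b}
  zero_mem' := by simp
  add_mem' := by
    rintro ⟨x, n⟩ ⟨y, m⟩ hx hy hnm
    dsimp only [Prod.mk_add_mk] at *
    rcases Nat.add_eq_one_iff.1 hnm with ⟨-, hm⟩ | ⟨hn, -⟩
    · rcases hy hm with ⟨a, rfl⟩ | ⟨a, rfl⟩
      · exact Or.inl ⟨x + a, add_left_comm _ _ _⟩
      · exact Or.inr ⟨x + a, add_left_comm _ _ _⟩
    · rcases hx hn with ⟨a, rfl⟩ | ⟨a, rfl⟩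
      · exact Or.inl ⟨a + y, add_assoc _ _ _⟩
      · exact Or.inr ⟨a + y, add_assoc _ _ _⟩

/-- The degree zero inclusion `p ↦ (p, 0)`. -/
def testHom (p₁ p₂ : P) : P →+ testMonoid p₁ p₂ :=
  (AddMonoidHom.inl P ℕ).codRestrict (testMonoid p₁ p₂) fun p => by
    intro h
    simp at h

theorem testMonoid_cancel (hP : IsIntegralMonoid P) (p₁ p₂ : P) :
    IsIntegralMonoid (testMonoid p₁ p₂) := by
  rintro ⟨⟨x, n⟩, hx⟩ ⟨⟨y, m⟩, hy⟩ ⟨⟨z, k⟩, hz⟩ h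
  simp only [AddMemClass.mk_add_mk, Prod.mk_add_mk, Subtype.mk.injEq, Prod.mk.injEq] at h ⊢
  exact ⟨hP _ _ _ h.1, by omega⟩

/-- The set `h ((p₁ + P) ∩ (p₂ + P)) + Q`. -/
def Glued (h : P →+ Q) (p₁ p₂ : P) (v : Q) : Prop :=
  ∃ (a b : P) (q : Q), p₁ + a = p₂ + b ∧ v = h (p₁ + a) + q

theorem Glued.add {h : P →+ Q} {p₁ p₂ : P} {v : Q} (hv : Glued h p₁ p₂ v) (w : Q) :
    Glued h p₁ p₂ (v + w) := by
  obtain ⟨a, b, q, h1, rfl⟩ := hv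
  exact ⟨a, b, q + w, h1, add_assoc _ _ _⟩

/-- The relation imposed on degree one elements `(x, q)` and `(x', q')` of common value
`v = h x + q = h x' + q'`: either `x` and `x'` lie in the same translate `pᵢ + P`, or `v` is in the
part along which the two translates are glued. -/
def SameSheet (h : P →+ Q) (p₁ p₂ x x' : P) (v : Q) : Prop :=
  Glued h p₁ p₂ v ∨ ((∃ a, x = p₁ + a) ∧ ∃ a, x' = p₁ + a) ∨
    ((∃ a, x = p₂ + a) ∧ ∃ a, x' = p₂ + a)

theorem SameSheet.add {h : P →+ Q} {p₁ p₂ x x' : P} {v : Q} (hs : SameSheet h p₁ p₂ x x' v)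
    (y y' : P) (w : Q) : SameSheet h p₁ p₂ (x + y) (x' + y') (v + w) := by
  rcases hs with hs | ⟨⟨a, rfl⟩, b, rfl⟩ | ⟨⟨a, rfl⟩, b, rfl⟩
  · exact Or.inl (hs.add w)
  · exact Or.inr (Or.inl ⟨⟨a + y, add_assoc _ _ _⟩, b + y', add_assoc _ _ _⟩)
  · exact Or.inr (Or.inr ⟨⟨a + y, add_assoc _ _ _⟩, b + y', add_assoc _ _ _⟩)

/-- An element of both translates `p₁ + P` and `p₂ + P` has glued value; this makes `SameSheet`
transitive. -/
theorem glued_of_mem {h : P →+ Q} {p₁ p₂ x : P} (h₁ : ∃ a, x = p₁ + a) (h₂ : ∃ a, x = p₂ + a)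
    (q : Q) : Glued h p₁ p₂ (h x + q) := by
  obtain ⟨a, rfl⟩ := h₁
  obtain ⟨b, hb⟩ := h₂
  exact ⟨a, b, q, hb, rfl⟩

/-- A congruence on `testMonoid p₁ p₂ × Q` identifying `(p, 0)` with `h p`, and coarse enough to be
explicit in every degree, while still separating the two translates in degree one away from the
glued part. -/
def testCon (h : P →+ Q) (p₁ p₂ : P) : AddCon (testMonoid p₁ p₂ × Q) where
  r x y := x.1.1.2 = y.1.1.2 ∧ h x.1.1.1 + x.2 = h y.1.1.1 + y.2 ∧
    (x.1.1.2 = 1 → SameSheet h p₁ p₂ x.1.1.1 y.1.1.1 (h x.1.1.1 + x.2))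
  iseqv := by
    refine ⟨?_, ?_, ?_⟩
    · rintro ⟨⟨⟨x, n⟩, hx⟩, q⟩
      refine ⟨rfl, rfl, fun hn => Or.inr ?_⟩
      exact (hx hn).imp (fun h => ⟨h, h⟩) (fun h => ⟨h, h⟩)
    · rintro x y ⟨h1, h2, h3⟩
      refine ⟨h1.symm, h2.symm, fun hn => ?_⟩
      rw [← h2]
      exact (h3 (h1.trans hn)).imp id (Or.imp And.symm And.symm)
    · rintro x y z ⟨h1, h2, h3⟩ ⟨h4, h5, h6⟩
      refine ⟨h1.trans h4, h2.trans h5, fun hn => ?_⟩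
      have h7 := h6 (h1.symm.trans hn)
      rw [← h2] at h7
      rcases h3 hn with hg | ⟨hx, hy⟩ | ⟨hx, hy⟩
      · exact Or.inl hg
      · rcases h7 with hg | ⟨hy', hz⟩ | ⟨hy', hz⟩
        · exact Or.inl hg
        · exact Or.inr (Or.inl ⟨hx, hz⟩)
        · exact Or.inl (h2 ▸ glued_of_mem hy hy' _)
      · rcases h7 with hg | ⟨hy', hz⟩ | ⟨hy', hz⟩
        · exact Or.inl hg
        · exact Or.inl (h2 ▸ glued_of_mem hy' hy _)
        · exact Or.inr (Or.inr ⟨hx, hz⟩)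
  add' := by
    rintro ⟨⟨⟨x, n⟩, hx⟩, q⟩ ⟨⟨⟨x', n'⟩, hx'⟩, q'⟩ ⟨⟨⟨y, m⟩, hy⟩, s⟩ ⟨⟨⟨y', m'⟩, hy'⟩, s'⟩
      ⟨h1, h2, h3⟩ ⟨h4, h5, h6⟩
    simp only [Prod.mk_add_mk, AddMemClass.mk_add_mk, map_add] at *
    refine ⟨by rw [h1, h4], ?_, fun hn => ?_⟩
    · rw [add_add_add_comm, h2, h5, add_add_add_comm]
    · rw [add_add_add_comm]
      rcases Nat.add_eq_one_iff.1 hn with ⟨-, hm⟩ | ⟨hn, -⟩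
      · rw [add_comm x, add_comm x', add_comm (h x + q)]
        exact (h6 hm).add _ _ _
      · exact (h3 hn).add _ _ _

theorem pushoutCon_le_testCon (h : P →+ Q) (p₁ p₂ : P) :
    pushoutCon h (testHom p₁ p₂) ≤ testCon h p₁ p₂ := by
  refine AddCon.addConGen_le.2 ?_
  rintro _ _ ⟨p, rfl, rfl⟩
  refine ⟨rfl, ?_, fun hn => ?_⟩
  · exact (add_zero (h p)).trans (by simp)
  · exact absurd (show (0 : ℕ) = 1 from hn) zero_ne_one

theorem isIntegralHom_of_pushouts (hQ : IsIntegralMonoid Q) (h : P →+ Q)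
    (H : ∀ p₁ p₂ : P, IsIntegralMonoid (pushoutCon h (testHom p₁ p₂)).Quotient) :
    IsIntegralHom h := by
  intro p₁ p₂ q₁ q₂ heq
  let C := pushoutCon h (testHom p₁ p₂)
  let r₁ : testMonoid p₁ p₂ := ⟨(p₁, 1), fun _ => Or.inl ⟨0, (add_zero _).symm⟩⟩
  let r₂ : testMonoid p₁ p₂ := ⟨(p₂, 1), fun _ => Or.inr ⟨0, (add_zero _).symm⟩⟩
  have hrel (p : P) : (((0, h p) : testMonoid p₁ p₂ × Q) : C.Quotient) =
      ((testHom p₁ p₂ p, 0) : testMonoid p₁ p₂ × Q) :=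
    DFunLike.congr_fun (isMonoidPushout_pushoutCon h (testHom p₁ p₂)).comm p
  have hr : r₁ + testHom p₁ p₂ p₂ = r₂ + testHom p₁ p₂ p₁ :=
    Subtype.ext (Prod.ext (add_comm p₁ p₂) rfl)
  -- Both sides agree after adding the image of `p₁`.
  have key : (((r₁, q₁) : testMonoid p₁ p₂ × Q) : C.Quotient) =
      ((r₂, q₂) : testMonoid p₁ p₂ × Q) := by
    refine H p₁ p₂ _ _ (((0, h p₁) : testMonoid p₁ p₂ × Q) : C.Quotient) ?_
    calc (((r₁, q₁) : testMonoid p₁ p₂ × Q) : C.Quotient)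
          + (((0, h p₁) : testMonoid p₁ p₂ × Q) : C.Quotient)
        = (((r₁, q₂) : testMonoid p₁ p₂ × Q) : C.Quotient)
          + (((0, h p₂) : testMonoid p₁ p₂ × Q) : C.Quotient) := by
          rw [← AddCon.coe_add, ← AddCon.coe_add, Prod.mk_add_mk, Prod.mk_add_mk,
            add_comm q₁, heq, add_comm q₂]
      _ = (((r₂, q₂) : testMonoid p₁ p₂ × Q) : C.Quotient)
          + (((0, h p₁) : testMonoid p₁ p₂ × Q) : C.Quotient) := by
          rw [hrel, hrel, ← AddCon.coe_add, ← AddCon.coe_add, Prod.mk_add_mk, Prod.mk_add_mk, hr]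
  obtain ⟨-, -, hs⟩ := pushoutCon_le_testCon h p₁ p₂ ((AddCon.eq _).1 key)
  have hg : Glued h p₁ p₂ (h p₁ + q₁) := by
    rcases hs rfl with hg | ⟨-, h2⟩ | ⟨h1, -⟩
    · exact hg
    · rw [heq]
      exact glued_of_mem h2 ⟨0, (add_zero _).symm⟩ _
    · exact glued_of_mem ⟨0, (add_zero _).symm⟩ h1 _
  obtain ⟨a, b, q, hab, hv⟩ := hg
  refine ⟨a, b, q, hQ _ _ (h p₁) ?_, hQ _ _ (h p₂) ?_, hab⟩
  · rw [add_comm, hv, map_add, add_assoc, add_comm]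
  · rw [add_comm, ← heq, hv, hab, map_add, add_assoc, add_comm]

end Backward

/-- `h` is integral iff all its pushouts along maps to integral commutative monoids
are integral (cancellative) monoids. -/
theorem isIntegralHom_iff_pushouts_integral {P Q : Type u}
    [AddCommMonoid P] [AddCommMonoid Q]
    (hP : IsIntegralMonoid P) (hQ : IsIntegralMonoid Q) (h : P →+ Q) :
    IsIntegralHom h ↔
      ∀ (R : Type u) [AddCommMonoid R], IsIntegralMonoid R →
        ∀ (g : P →+ R) (T : Type u) [AddCommMonoid T] (inQ : Q →+ T) (inR : R →+ T),
          IsMonoidPushout h g inQ inR → IsIntegralMonoid T := by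
  constructor
  · intro hh R _ hR g T _ inQ inR hT
    exact isIntegralMonoid_of_isMonoidPushout hQ hR hh hT
  · intro H
    exact isIntegralHom_of_pushouts hQ h fun p₁ p₂ =>
      H _ (testMonoid_cancel hP p₁ p₂) _ _ _ _ (isMonoidPushout_pushoutCon h _)
end

section
/- If h₁ : P → Q and h₂ : Q → R are saturated homomorphisms between saturated commutative monoids, then the composite h₂ ∘ h₁ : P → R is a saturated homomorphism. (This is the paper's claim that saturated morphisms are stable under composition, stated at the level of monoids.) -/
/-!
Integrality of a composite follows by applying the two integrality conditions in succession.

For the pushout condition, the idea is the pasting law.  Given `g : P → S` with `S` saturated, form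
the pushout `S'` of `h₁` along `g`; it exists as a quotient of `Q × S` (`exists_isMonoidPushout`)
and is saturated because `h₁` is a saturated homomorphism.  Any pushout of `h₂ ∘ h₁` along `g` is
then a pushout of `h₂` along `Q → S'` (`IsMonoidPushout.of_comp`), so it is integral and saturated
because `h₂` is a saturated homomorphism.
-/

/-!
STATEMENT 3: If `h₁ : P → Q` and `h₂ : Q → R` are saturated homomorphisms between
saturated commutative monoids, then the composite `h₂ ∘ h₁ : P → R` is a saturated
homomorphism.
-/

universe u

/-- An integral commutative monoid `M` is *saturated* if every element `x` of its
Grothendieck group `M^gp` with `n • x` in the image of `M` for some `n ≥ 1` lies in the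
image of `M`.  For an integral monoid every element of `M^gp` is a difference `a - b`
with `a b : M`, so this says: if `n • a = n • b + c` for some `c : M` and some `n ≥ 1`,
then `a = b + d` for some `d : M`. -/
def IsSaturatedMonoid (M : Type u) [AddCommMonoid M] : Prop :=
  IsIntegralMonoid M ∧
    ∀ (a b : M) (n : ℕ), 1 ≤ n → (∃ c : M, n • a = n • b + c) → ∃ d : M, a = b + d

/-- A homomorphism `h : P → Q` of saturated commutative monoids is *saturated* if it is
integral and, for every saturated commutative monoid `R` and every homomorphism
`g : P → R`, the pushout `R ⊔_P Q` in the category of commutative monoids is an integral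
and saturated monoid. -/
def IsSaturatedHom {P Q : Type u} [AddCommMonoid P] [AddCommMonoid Q] (h : P →+ Q) : Prop :=
  IsIntegralHom h ∧
    ∀ (R : Type u) [AddCommMonoid R], IsSaturatedMonoid R →
      ∀ (g : P →+ R) (T : Type u) [AddCommMonoid T] (inQ : Q →+ T) (inR : R →+ T),
        IsMonoidPushout h g inQ inR → IsIntegralMonoid T ∧ IsSaturatedMonoid T

/-- Pushouts exist in the category of commutative monoids: divide `Q × S` by the congruence
generated by `(h p, 0) ∼ (0, g p)`. -/
theorem exists_isMonoidPushout {P Q S : Type u}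
    [AddCommMonoid P] [AddCommMonoid Q] [AddCommMonoid S] (h : P →+ Q) (g : P →+ S) :
    ∃ (T : Type u) (_ : AddCommMonoid T) (inQ : Q →+ T) (inS : S →+ T),
      IsMonoidPushout h g inQ inS := by
  let r : Q × S → Q × S → Prop := fun x y => ∃ p, x = (h p, 0) ∧ y = (0, g p)
  refine ⟨(addConGen r).Quotient, inferInstance,
    (addConGen r).mk'.comp (AddMonoidHom.inl Q S),
    (addConGen r).mk'.comp (AddMonoidHom.inr Q S), ?_, ?_⟩
  · ext p
    exact (AddCon.eq _).2 (AddConGen.Rel.of _ _ ⟨p, rfl, rfl⟩)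
  · intro X _ fQ fS hf
    have hle : addConGen r ≤ AddCon.ker (fQ.coprod fS) := by
      refine AddCon.addConGen_le.2 ?_
      rintro _ _ ⟨p, rfl, rfl⟩
      simpa [AddCon.ker_rel] using DFunLike.congr_fun hf p
    refine ⟨(addConGen r).lift (fQ.coprod fS) hle, ⟨?_, ?_⟩, ?_⟩
    · ext q
      exact (AddCon.lift_mk' hle _).trans (by simp)
    · ext s
      exact (AddCon.lift_mk' hle _).trans (by simp)
    · rintro d ⟨rfl, rfl⟩
      refine AddCon.lift_unique hle d ?_
      ext ⟨q, s⟩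
      simp [← map_add, ← AddCon.coe_add]

/-- Pasting law: if the first square and the outer rectangle are pushouts, so is the second
square, with the comparison map `k` induced by the universal property of the first one. -/
theorem IsMonoidPushout.of_comp {P Q R S S' T : Type u}
    [AddCommMonoid P] [AddCommMonoid Q] [AddCommMonoid R]
    [AddCommMonoid S] [AddCommMonoid S'] [AddCommMonoid T]
    {h₁ : P →+ Q} {h₂ : Q →+ R} {g : P →+ S}
    {iQ : Q →+ S'} {iS : S →+ S'} {inR : R →+ T} {inS : S →+ T}
    (H₁ : IsMonoidPushout h₁ g iQ iS) (H : IsMonoidPushout (h₂.comp h₁) g inR inS) :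
    ∃ k : S' →+ T, IsMonoidPushout h₂ iQ inR k := by
  obtain ⟨k, ⟨hkQ, hkS⟩, -⟩ := H₁.desc T (inR.comp h₂) inS H.comm
  refine ⟨k, hkQ.symm, fun X _ fR fS' hf => ?_⟩
  have hcomm : fR.comp (h₂.comp h₁) = (fS'.comp iS).comp g := by
    rw [← AddMonoidHom.comp_assoc, hf, AddMonoidHom.comp_assoc, H₁.comm,
      AddMonoidHom.comp_assoc]
  obtain ⟨d, ⟨hdR, hdS⟩, hd⟩ := H.desc X fR (fS'.comp iS) hcomm
  refine ⟨d, ⟨hdR, ?_⟩, ?_⟩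
  · -- Both maps out of `S'` agree after restriction to `Q` and to `S`.
    refine (H₁.desc X (fS'.comp iQ) (fS'.comp iS) ?_).unique ⟨?_, ?_⟩ ⟨rfl, rfl⟩
    · rw [AddMonoidHom.comp_assoc, H₁.comm, AddMonoidHom.comp_assoc]
    · rw [AddMonoidHom.comp_assoc, hkQ, ← AddMonoidHom.comp_assoc, hdR, hf]
    · rw [AddMonoidHom.comp_assoc, hkS, hdS]
  · rintro e ⟨heR, rfl⟩
    exact hd e ⟨heR, by rw [AddMonoidHom.comp_assoc, hkS]⟩

theorem IsIntegralHom.comp {P Q R : Type u}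
    [AddCommMonoid P] [AddCommMonoid Q] [AddCommMonoid R] {h₁ : P →+ Q} {h₂ : Q →+ R}
    (H₁ : IsIntegralHom h₁) (H₂ : IsIntegralHom h₂) : IsIntegralHom (h₂.comp h₁) := by
  intro p₁ p₂ r₁ r₂ h
  obtain ⟨q₃, q₄, r, rfl, rfl, hq⟩ := H₂ (h₁ p₁) (h₁ p₂) r₁ r₂ h
  obtain ⟨p₃, p₄, q, rfl, rfl, hp⟩ := H₁ p₁ p₂ q₃ q₄ hq
  exact ⟨p₃, p₄, h₂ q + r, by simp [add_assoc], by simp [add_assoc], hp⟩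

/-- The composite of saturated homomorphisms between saturated commutative monoids is
saturated. -/
theorem IsSaturatedHom.comp {P Q R : Type u}
    [AddCommMonoid P] [AddCommMonoid Q] [AddCommMonoid R]
    (hP : IsSaturatedMonoid P) (hQ : IsSaturatedMonoid Q) (hR : IsSaturatedMonoid R)
    (h₁ : P →+ Q) (h₂ : Q →+ R)
    (H₁ : IsSaturatedHom h₁) (H₂ : IsSaturatedHom h₂) :
    IsSaturatedHom (h₂.comp h₁) := by
  refine ⟨H₁.1.comp H₂.1, fun S _ hS g T _ inR inS hT => ?_⟩
  obtain ⟨S', _, iQ, iS, hS'⟩ := exists_isMonoidPushout h₁ g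
  obtain ⟨k, hk⟩ := hS'.of_comp hT
  exact H₂.2 S' (H₁.2 S hS g S' iQ iS hS').2 iQ T inR k hk
end

section
/- Let P, Q, R be finitely generated saturated integral commutative monoids (fs monoids), let h : P → Q be a saturated homomorphism, and let g : P → R be any monoid homomorphism. Then the pushout R ⊔_P Q in the category of commutative monoids is finitely generated, integral, and saturated; in particular the fs pushout of h along g coincides with the pushout of the underlying commutative monoids. (This is the monoid-level content of the paper's claim that for a cartesian square of fs log stacks with one leg saturated, the underlying diagram of stacks is cartesian.) -/
/-!
STATEMENT 5: Let `P, Q, R` be finitely generated saturated integral commutative monoids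
(fs monoids), let `h : P → Q` be a saturated homomorphism, and let `g : P → R` be any
monoid homomorphism.  Then the pushout `R ⊔_P Q` in the category of commutative monoids
is finitely generated, integral, and saturated; in particular the fs pushout of `h` along
`g` coincides with the pushout of the underlying commutative monoids, i.e. the monoid
pushout also satisfies the universal property of the pushout in the category of fs
monoids.
-/

universe u

/-!
Integrality and saturation of the pushout `T` are exactly what saturatedness of `h` provides
for the saturated monoid `R`, and the universal property among fs monoids is a special case of
the one among all commutative monoids. What remains is finite generation: the images of `Q`
and `R` together generate `T` (`IsMonoidPushout.exists_add_eq`), so the images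
of finite generating sets of `Q` and `R` generate `T`.
-/

/-- The cobase change maps of a pushout jointly generate it: by the universal property `T`
retracts onto the submonoid generated by the two images, so that submonoid is all of `T`. -/
theorem IsMonoidPushout.exists_add_eq {P Q R T : Type u}
    [AddCommMonoid P] [AddCommMonoid Q] [AddCommMonoid R] [AddCommMonoid T]
    {h : P →+ Q} {g : P →+ R} {inQ : Q →+ T} {inR : R →+ T}
    (hpo : IsMonoidPushout h g inQ inR) (t : T) : ∃ q r, inQ q + inR r = t := by
  let S : AddSubmonoid T := AddMonoidHom.mrange (inQ.coprod inR)
  have hQ : ∀ q, inQ q ∈ S := fun q => ⟨(q, 0), by simp⟩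
  have hR : ∀ r, inR r ∈ S := fun r => ⟨(0, r), by simp⟩
  obtain ⟨d, ⟨hdQ, hdR⟩, -⟩ := hpo.desc S (inQ.codRestrict S hQ) (inR.codRestrict S hR)
    (AddMonoidHom.ext fun p => Subtype.ext (DFunLike.congr_fun hpo.comm p))
  -- Both the identity and the retraction onto `S` are induced by the pair `(inQ, inR)`.
  have hd : S.subtype.comp d = AddMonoidHom.id T :=
    (hpo.desc T inQ inR hpo.comm).unique
      ⟨by rw [AddMonoidHom.comp_assoc, hdQ]; rfl, by rw [AddMonoidHom.comp_assoc, hdR]; rfl⟩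
      ⟨rfl, rfl⟩
  obtain ⟨⟨q, r⟩, hqr⟩ := (d t).2
  exact ⟨q, r, hqr.trans (DFunLike.congr_fun hd t)⟩

/-- The pushout of fs monoids along a saturated homomorphism is again an fs monoid;
in particular it is also a pushout in the category of fs monoids. -/
theorem fs_pushout_of_saturated {P Q R T : Type u}
    [AddCommMonoid P] [AddCommMonoid Q] [AddCommMonoid R] [AddCommMonoid T]
    (hPfg : AddMonoid.FG P) (hQfg : AddMonoid.FG Q) (hRfg : AddMonoid.FG R)
    (hPint : IsIntegralMonoid P) (hQint : IsIntegralMonoid Q) (hRint : IsIntegralMonoid R)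
    (hPsat : IsSaturatedMonoid P) (hQsat : IsSaturatedMonoid Q) (hRsat : IsSaturatedMonoid R)
    (h : P →+ Q) (hh : IsSaturatedHom h) (g : P →+ R)
    (inQ : Q →+ T) (inR : R →+ T) (hpo : IsMonoidPushout h g inQ inR) :
    AddMonoid.FG T ∧ IsIntegralMonoid T ∧ IsSaturatedMonoid T ∧
      (∀ (X : Type u) [AddCommMonoid X], AddMonoid.FG X → IsIntegralMonoid X →
        IsSaturatedMonoid X → ∀ (fQ : Q →+ X) (fR : R →+ X), fQ.comp h = fR.comp g →
          ∃! d : T →+ X, d.comp inQ = fQ ∧ d.comp inR = fR) := by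
  obtain ⟨hTint, hTsat⟩ := hh.2 R hRsat g T inQ inR hpo
  refine ⟨?_, hTint, hTsat, fun X _ _ _ _ fQ fR hf => hpo.desc X fQ fR hf⟩
  have hsup : AddMonoidHom.mrange inQ ⊔ AddMonoidHom.mrange inR = ⊤ := by
    refine eq_top_iff.2 fun t _ => ?_
    obtain ⟨q, r, rfl⟩ := hpo.exists_add_eq t
    exact AddSubmonoid.add_mem_sup ⟨q, rfl⟩ ⟨r, rfl⟩
  rw [AddMonoid.fg_def, ← hsup, AddMonoidHom.mrange_eq_map, AddMonoidHom.mrange_eq_map]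
  exact ((AddMonoid.fg_def.1 hQfg).map inQ).sup ((AddMonoid.fg_def.1 hRfg).map inR)
end
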